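/- Let Λ be a trace-preserving linear map on d×d complex matrices whose Choi–Jamiołkowski matrix is CC: (id⊗Λ)(P₊) = ∑_{i,j} p_{ij} |e_i⟩⟨e_i| ⊗ |f_j⟩⟨f_j| with {e_i}, {f_j} orthonormal bases of ℂ^d and (p_{ij}) a joint probability distribution. Define E_j := d ∑_i p_{ij} |e_i*⟩⟨e_i*|, where e_i* is the entrywise complex conjugate of e_i in the standard basis. Then: (1) Λ(ρ) = ∑_j Tr(ρ E_j) |f_j⟩⟨f_j| for every ρ; (2) the E_j are positive semidefinite and sum to the identity (a POVM); and (3) the E_j pairwise commute: E_j E_{j'} = E_{j'} E_j for all j, j'. -/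

import Mathlib

open Matrix Kronecker BigOperators
open scoped ComplexOrder

noncomputable section

/-- Rank-one projector `|v⟩⟨v|`. -/
def proj {n : Type*} (v : n → ℂ) : Matrix n n ℂ :=
  Matrix.of fun a b => v a * star (v b)

/-- `e` is an orthonormal basis (an orthonormal family of `d` vectors) of `ℂ^d`. -/
def ONB (d : ℕ) (e : Fin d → Fin d → ℂ) : Prop :=
  ∀ i j, star (e i) ⬝ᵥ e j = if i = j then 1 else 0

/-- A quantum state: positive semidefinite with unit trace. -/
def IsState {n : Type*} [Fintype n] [DecidableEq n] (ρ : Matrix n n ℂ) : Prop :=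
  ρ.PosSemidef ∧ ρ.trace = 1

/-- The maximally entangled projector `P₊ = (1/d) ∑_{i,j} |ii⟩⟨jj|`. -/
def Pplus (d : ℕ) : Matrix (Fin d × Fin d) (Fin d × Fin d) ℂ :=
  Matrix.of fun p q => if p.1 = p.2 ∧ q.1 = q.2 then (d : ℂ)⁻¹ else 0

/-- `id ⊗ Λ`: the extension of `Λ` acting on the second tensor factor. -/
def idTensor {dA dB : ℕ}
    (Λ : Matrix (Fin dB) (Fin dB) ℂ → Matrix (Fin dB) (Fin dB) ℂ)
    (M : Matrix (Fin dA × Fin dB) (Fin dA × Fin dB) ℂ) :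
    Matrix (Fin dA × Fin dB) (Fin dA × Fin dB) ℂ :=
  Matrix.of fun p q => Λ (Matrix.of fun b b' => M (p.1, b) (q.1, b')) p.2 q.2

/-- `Λ ⊗ id`: the extension of `Λ` acting on the first tensor factor. -/
def tensorId {dA dB : ℕ}
    (Λ : Matrix (Fin dA) (Fin dA) ℂ → Matrix (Fin dA) (Fin dA) ℂ)
    (M : Matrix (Fin dA × Fin dB) (Fin dA × Fin dB) ℂ) :
    Matrix (Fin dA × Fin dB) (Fin dA × Fin dB) ℂ :=
  Matrix.of fun p q => Λ (Matrix.of fun a a' => M (a, p.2) (a', q.2)) p.1 q.1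

/-- Partial trace over the first factor. -/
def ptraceA {dA dB : ℕ} (M : Matrix (Fin dA × Fin dB) (Fin dA × Fin dB) ℂ) :
    Matrix (Fin dB) (Fin dB) ℂ :=
  Matrix.of fun b b' => ∑ a, M (a, b) (a, b')

/-- Partial trace over the second factor. -/
def ptraceB {dA dB : ℕ} (M : Matrix (Fin dA × Fin dB) (Fin dA × Fin dB) ℂ) :
    Matrix (Fin dA) (Fin dA) ℂ :=
  Matrix.of fun a a' => ∑ b, M (a, b) (a', b)

/-- Trace preserving map. -/
def TracePreserving {d : ℕ}
    (Λ : Matrix (Fin d) (Fin d) ℂ → Matrix (Fin d) (Fin d) ℂ) : Prop :=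
  ∀ X, (Λ X).trace = X.trace

/-- QC (quantum–classical) bipartite state. -/
def IsQC {dA dB : ℕ} (σ : Matrix (Fin dA × Fin dB) (Fin dA × Fin dB) ℂ) : Prop :=
  ∃ (e : Fin dB → Fin dB → ℂ) (p : Fin dB → ℝ)
    (ρ : Fin dB → Matrix (Fin dA) (Fin dA) ℂ),
    ONB dB e ∧ (∀ i, 0 ≤ p i) ∧ (∑ i, p i) = 1 ∧ (∀ i, IsState (ρ i)) ∧
      σ = ∑ i, (p i : ℂ) • (ρ i ⊗ₖ proj (e i))

/-- CQ (classical–quantum) bipartite state. -/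
def IsCQ {dA dB : ℕ} (σ : Matrix (Fin dA × Fin dB) (Fin dA × Fin dB) ℂ) : Prop :=
  ∃ (e : Fin dA → Fin dA → ℂ) (p : Fin dA → ℝ)
    (ρ : Fin dA → Matrix (Fin dB) (Fin dB) ℂ),
    ONB dA e ∧ (∀ i, 0 ≤ p i) ∧ (∑ i, p i) = 1 ∧ (∀ i, IsState (ρ i)) ∧
      σ = ∑ i, (p i : ℂ) • (proj (e i) ⊗ₖ ρ i)

/-- CC (classical–classical) bipartite state. -/
def IsCC {dA dB : ℕ} (σ : Matrix (Fin dA × Fin dB) (Fin dA × Fin dB) ℂ) : Prop :=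
  ∃ (e : Fin dA → Fin dA → ℂ) (f : Fin dB → Fin dB → ℂ) (p : Fin dA → Fin dB → ℝ),
    ONB dA e ∧ ONB dB f ∧ (∀ i j, 0 ≤ p i j) ∧ (∑ i, ∑ j, p i j) = 1 ∧
      σ = ∑ i, ∑ j, (p i j : ℂ) • (proj (e i) ⊗ₖ proj (f j))

/-- The POVM element `E_j := d ∑ᵢ p_{ij} |eᵢ*⟩⟨eᵢ*|` built from a CC Choi matrix. -/
def Ecc (d : ℕ) (e : Fin d → Fin d → ℂ) (p : Fin d → Fin d → ℝ) (j : Fin d) :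
    Matrix (Fin d) (Fin d) ℂ :=
  (d : ℂ) • ∑ i, (p i j : ℂ) • proj (fun k => star (e i k))

/-!
The `(k, l)` block of `(id ⊗ Λ)(P₊)` is `d⁻¹ Λ(|k⟩⟨l|)`. If this matrix equals `∑ⱼ Aⱼ ⊗ τⱼ`, then
`Λ(|k⟩⟨l|) = d ∑ⱼ (Aⱼ)ₖₗ τⱼ`, so `Λ` measures the effects `Eⱼ = d Aⱼᵀ` and prepares `τⱼ`; the
complex conjugates arise because `|v⟩⟨v|ᵀ = |v*⟩⟨v*|`. Taking traces, `Tr(X ∑ⱼ Eⱼ) = Tr X` for all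
`X`, which forces `∑ⱼ Eⱼ = 1`, and the effects commute because they are combinations of the same
mutually orthogonal projectors.
-/

section MeasureAndPrepare

variable {R M ι k m n : Type*} [CommSemiring R] [AddCommMonoid M] [Module R M]
  [Fintype ι] [Fintype k] [Fintype m] [Fintype n]

/-- The measure-and-prepare map `X ↦ ∑ⱼ Tr(X Eⱼ) τⱼ`: outcome `j` of the measurement `E` is answered
by preparing `τ j`. No positivity or normalization is built in. -/
def measureAndPrepare (E : ι → Matrix n m R) (τ : ι → M) : Matrix m n R →ₗ[R] M :=
  ∑ j, (traceLinearMap m R R ∘ₗ mulRightLinearMap m R (E j)).smulRight (τ j)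

theorem measureAndPrepare_apply (E : ι → Matrix n m R) (τ : ι → M) (X : Matrix m n R) :
    measureAndPrepare E τ X = ∑ j, (X * E j).trace • τ j := by
  simp [measureAndPrepare]

theorem eq_measureAndPrepare_of_map_single [DecidableEq m] [DecidableEq n]
    (Λ : Matrix m n R →ₗ[R] M) (E : ι → Matrix n m R) (τ : ι → M)
    (hΛ : ∀ a a', Λ (single a a' 1) = ∑ j, E j a' a • τ j) :
    Λ = measureAndPrepare E τ := by
  refine Matrix.ext_linearMap _ fun a a' => LinearMap.ext_ring ?_
  simp [measureAndPrepare_apply, hΛ, trace_single_mul]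

theorem sum_eq_one_of_trace_measureAndPrepare [DecidableEq n] (E : ι → Matrix n n R)
    (τ : ι → Matrix k k R) (hτ : ∀ j, (τ j).trace = 1)
    (htrace : ∀ X, (measureAndPrepare E τ X).trace = X.trace) : ∑ j, E j = 1 := by
  refine ext_iff_trace_mul_left.mpr fun X => ?_
  calc (X * ∑ j, E j).trace = (measureAndPrepare E τ X).trace := by
        simp [measureAndPrepare_apply, Finset.mul_sum, trace_sum, hτ]
    _ = (X * (1 : Matrix n n R)).trace := by rw [htrace, Matrix.mul_one]

end MeasureAndPrepare

section Choi

variable {d : ℕ} {ι : Type*} [Fintype ι]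
  (Λ : Matrix (Fin d) (Fin d) ℂ →ₗ[ℂ] Matrix (Fin d) (Fin d) ℂ)

theorem idTensor_Pplus_apply (a b a' b' : Fin d) :
    idTensor Λ (Pplus d) (a, b) (a', b') = (d : ℂ)⁻¹ * Λ (single a a' 1) b b' := by
  have block : (of fun c c' => Pplus d (a, c) (a', c')) = (d : ℂ)⁻¹ • single a a' (1 : ℂ) := by
    ext c c'
    simp [Pplus, single_apply]
  rw [idTensor, of_apply, block, map_smul, Matrix.smul_apply, smul_eq_mul]

theorem eq_measureAndPrepare_of_idTensor_Pplus (A τ : ι → Matrix (Fin d) (Fin d) ℂ)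
    (hChoi : idTensor Λ (Pplus d) = ∑ j, A j ⊗ₖ τ j) :
    Λ = measureAndPrepare (fun j => (d : ℂ) • (A j)ᵀ) τ := by
  refine eq_measureAndPrepare_of_map_single Λ _ τ fun a a' => ?_
  ext b b'
  have hd : (d : ℂ) ≠ 0 := Nat.cast_ne_zero.mpr a.pos.ne'
  have hentry : (d : ℂ)⁻¹ * Λ (single a a' 1) b b' = ∑ j, A j a a' * τ j b b' := by
    rw [← idTensor_Pplus_apply, hChoi, Matrix.sum_apply]
    rfl
  rw [(inv_mul_eq_iff_eq_mul₀ hd).mp hentry]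
  simp [Matrix.sum_apply, Finset.mul_sum, mul_assoc]

end Choi

section WeightedProj

variable {κ n : Type*}

theorem transpose_proj (v : n → ℂ) : (proj v)ᵀ = proj (star v) := by
  ext a b
  simp [proj, mul_comm]

theorem posSemidef_proj [Finite n] (v : n → ℂ) : (proj v).PosSemidef :=
  posSemidef_vecMulVec_self_star v

theorem trace_proj [Fintype n] (v : n → ℂ) : (proj v).trace = star v ⬝ᵥ v :=
  (trace_vecMulVec v (star v)).trans (dotProduct_comm _ _)

theorem proj_mul_proj_of_orthogonal [Fintype n] {u v : n → ℂ} (huv : star u ⬝ᵥ v = 0) :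
    proj u * proj v = 0 := by
  change vecMulVec u (star u) * vecMulVec v (star v) = 0
  rw [vecMulVec_mul_vecMulVec, huv, zero_smul, vecMulVec_zero]

variable [Fintype κ]

/-- The operator `∑ᵢ wᵢ |eᵢ⟩⟨eᵢ|`, which is diagonal with eigenvalues `w` when `e` is an
orthonormal basis. The family `e` is arbitrary here. -/
def weightedProj (e : κ → n → ℂ) (w : κ → ℝ) : Matrix n n ℂ :=
  ∑ i, (w i : ℂ) • proj (e i)

theorem transpose_weightedProj (e : κ → n → ℂ) (w : κ → ℝ) :
    (weightedProj e w)ᵀ = weightedProj (star e) w := by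
  simp [weightedProj, transpose_sum, transpose_proj]

theorem posSemidef_weightedProj [Finite n] (e : κ → n → ℂ) {w : κ → ℝ} (hw : ∀ i, 0 ≤ w i) :
    (weightedProj e w).PosSemidef :=
  posSemidef_sum _ fun i _ => (posSemidef_proj (e i)).smul (Complex.zero_le_real.mpr (hw i))

theorem commute_weightedProj [Fintype n] {e : κ → n → ℂ}
    (he : Pairwise fun i k => star (e i) ⬝ᵥ e k = 0)
    (w w' : κ → ℝ) : Commute (weightedProj e w) (weightedProj e w') := by
  have hproj (i k : κ) : Commute (proj (e i)) (proj (e k)) := by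
    obtain rfl | hik := eq_or_ne i k
    · exact Commute.refl _
    · exact (proj_mul_proj_of_orthogonal (he hik)).trans
        (proj_mul_proj_of_orthogonal (he hik.symm)).symm
  exact Commute.sum_left _ _ _ fun i _ => Commute.sum_right _ _ _ fun k _ =>
    ((hproj i k).smul_left _).smul_right _

end WeightedProj

theorem cc_choi_measurement_commuting_povm_general {d : ℕ} {κ ι : Type*} [Fintype κ] [Fintype ι]
    (Λ : Matrix (Fin d) (Fin d) ℂ →ₗ[ℂ] Matrix (Fin d) (Fin d) ℂ) (hTP : TracePreserving Λ)
    (e : κ → Fin d → ℂ) (he : Pairwise fun i k => star (e i) ⬝ᵥ e k = 0)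
    (τ : ι → Matrix (Fin d) (Fin d) ℂ) (hτ : ∀ j, (τ j).trace = 1)
    (p : κ → ι → ℝ) (hp : ∀ i j, 0 ≤ p i j)
    (hChoi : idTensor Λ (Pplus d) = ∑ i, ∑ j, (p i j : ℂ) • (proj (e i) ⊗ₖ τ j)) :
    let E : ι → Matrix (Fin d) (Fin d) ℂ := fun j => (d : ℂ) • weightedProj (star e) (p · j)
    (∀ ρ, Λ ρ = ∑ j, (ρ * E j).trace • τ j) ∧ (∀ j, (E j).PosSemidef) ∧ ∑ j, E j = 1 ∧
      ∀ j j', E j * E j' = E j' * E j := by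
  intro E
  have hChoi' : idTensor Λ (Pplus d) = ∑ j, weightedProj e (p · j) ⊗ₖ τ j := by
    rw [hChoi, Finset.sum_comm]
    ext
    simp [weightedProj, Matrix.sum_apply, Finset.sum_mul, mul_assoc]
  have hΛ : Λ = measureAndPrepare E τ := by
    simpa only [transpose_weightedProj] using eq_measureAndPrepare_of_idTensor_Pplus Λ _ τ hChoi'
  have he_star : Pairwise fun i k => star (star e i) ⬝ᵥ star e k = 0 := fun i k hik => by
    simp only [Pi.star_apply, star_dotProduct_star, dotProduct_comm (e k), he hik, star_zero]
  refine ⟨fun ρ => ?_, fun j => ?_, ?_, fun j j' => ?_⟩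
  · rw [hΛ, measureAndPrepare_apply]
  · exact (posSemidef_weightedProj (star e) (hp · j)).smul (Nat.cast_nonneg d)
  · exact sum_eq_one_of_trace_measureAndPrepare E τ hτ (hΛ ▸ hTP)
  · exact ((commute_weightedProj he_star _ _).smul_left _).smul_right _

/-- If the Choi–Jamiołkowski matrix of a trace-preserving map is CC, then the map
is a measurement map for the pairwise commuting POVM `E_j = d ∑ᵢ p_{ij} |eᵢ*⟩⟨eᵢ*|`. -/
theorem cc_choi_measurement_commuting_povm (d : ℕ)
    (Λ : Matrix (Fin d) (Fin d) ℂ →ₗ[ℂ] Matrix (Fin d) (Fin d) ℂ)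
    (hTP : TracePreserving (⇑Λ))
    (e : Fin d → Fin d → ℂ) (he : ONB d e)
    (f : Fin d → Fin d → ℂ) (hf : ONB d f)
    (p : Fin d → Fin d → ℝ) (hp0 : ∀ i j, 0 ≤ p i j) (hp1 : ∑ i, ∑ j, p i j = 1)
    (hChoi : idTensor (⇑Λ) (Pplus d)
      = ∑ i, ∑ j, (p i j : ℂ) • (proj (e i) ⊗ₖ proj (f j))) :
    (∀ ρ : Matrix (Fin d) (Fin d) ℂ,
        Λ ρ = ∑ j, (ρ * Ecc d e p j).trace • proj (f j)) ∧
    (∀ j, (Ecc d e p j).PosSemidef) ∧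
    (∑ j, Ecc d e p j = (1 : Matrix (Fin d) (Fin d) ℂ)) ∧
    (∀ j j', Ecc d e p j * Ecc d e p j' = Ecc d e p j' * Ecc d e p j) := by
  exact cc_choi_measurement_commuting_povm_general Λ hTP e (fun i k hik => by simp [he i k, hik])
    (fun j => proj (f j)) (fun j => by simp [trace_proj, hf j j]) p hp0 hChoi

end
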